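/- arXiv:2404.19223 — 7 statements merged into one kernel-verified Lean document; each statement's English description precedes it below -/
import Mathlib

section
/- Closedness of the set of admissible disturbance bounds: if f : (Fin n → ℝ) → (Fin n → ℝ) is continuous and S is a closed subset of the space of trajectories Fin N → (Fin n → ℝ) (with its product topology), then for every state x the set {ε : ℝ | 0 ≤ ε ∧ ξ(x,ε) ⊆ S} is a closed subset of ℝ. -/
open Classical Set Filter

noncomputable section

/-- The set of perturbed trajectories of length `N` of the system
`x(k+1) = f (x k) + d k` with `‖d k‖_∞ ≤ ε`, starting at `x`.
The norm on `Fin n → ℝ` is the sup norm. -/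
def xi {n : ℕ} (N : ℕ) [NeZero N] (f : (Fin n → ℝ) → (Fin n → ℝ))
    (x : Fin n → ℝ) (ε : ℝ) : Set (Fin N → (Fin n → ℝ)) :=
  {w | w 0 = x ∧ ∀ k : Fin N, ∀ h : (k : ℕ) + 1 < N,
    ‖w ⟨(k : ℕ) + 1, h⟩ - f (w k)‖ ≤ ε}

/-- The resilience of the system w.r.t. the specification (trajectory set) `S`
and initial state `x`. -/
def gres {n N : ℕ} [NeZero N] (f : (Fin n → ℝ) → (Fin n → ℝ))
    (S : Set (Fin N → (Fin n → ℝ))) (x : Fin n → ℝ) : ENNReal :=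
  if xi N f x 0 ⊆ S then
    sSup {e : ENNReal | ∃ ε : ℝ, 0 ≤ ε ∧ e = ENNReal.ofReal ε ∧ xi N f x ε ⊆ S}
  else 0

/-!
The trajectories with disturbances bounded by `ε ≥ 0` are the image of the closed `ε`-ball of
`ℓ^∞` disturbance sequences under a continuous map `Φ`, so `ε` is admissible iff that ball lies in
the closed set `Φ ⁻¹' S`. In a normed space `closedBall c ε` is the closure of `{c} ∪ ball c ε`, so
containment in a closed set only concerns the centre and the open ball, and the `ε` whose open ball
lies in a given set are cut out by the closed conditions `ε ≤ dist y c`, for `y` outside the set.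
-/

section ClosedBall

open Metric

theorem isClosed_setOf_ball_subset {α : Type*} [PseudoMetricSpace α] (c : α) (T : Set α) :
    IsClosed {r : ℝ | ball c r ⊆ T} := by
  have inter_Iic : {r : ℝ | ball c r ⊆ T} = ⋂ y ∈ Tᶜ, Iic (dist y c) := by
    ext r
    simp only [mem_ofPred_eq, mem_iInter, mem_Iic, mem_compl_iff, subset_def, mem_ball]
    exact forall_congr' fun y => by rw [← not_lt, not_imp_not]
  rw [inter_Iic]
  exact isClosed_biInter fun _ _ => isClosed_Iic

variable {V : Type*} [SeminormedAddCommGroup V] [NormedSpace ℝ V]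

theorem closure_insert_ball (c : V) {r : ℝ} (hr : 0 ≤ r) :
    closure (insert c (ball c r)) = closedBall c r := by
  rcases hr.eq_or_lt with rfl | hr
  · rw [ball_zero, insert_empty_eq, closedBall_zero']
  · rw [insert_eq_of_mem (mem_ball_self hr), closure_ball c hr.ne']

theorem isClosed_setOf_closedBall_subset (c : V) {T : Set V} (hT : IsClosed T) :
    IsClosed {r : ℝ | 0 ≤ r ∧ closedBall c r ⊆ T} := by
  have closedBall_iff : ∀ r : ℝ, 0 ≤ r → (closedBall c r ⊆ T ↔ c ∈ T ∧ ball c r ⊆ T) :=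
    fun r hr => by rw [← closure_insert_ball c hr, hT.closure_subset_iff, insert_subset_iff]
  simp only [and_congr_right (closedBall_iff _)]
  exact isClosed_Ici.inter (isClosed_const.inter (isClosed_setOf_ball_subset c T))

end ClosedBall

/-- The orbit of `x` under `x(k+1) = f (x k) + d k`, for a disturbance sequence `d`. -/
def disturbedOrbit {E : Type*} [Add E] (f : E → E) (x : E) (d : ℕ → E) : ℕ → E
  | 0 => x
  | k + 1 => f (disturbedOrbit f x d k) + d k

theorem continuous_disturbedOrbit {E T : Type*} [TopologicalSpace E] [Add E] [ContinuousAdd E]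
    [TopologicalSpace T] {f : E → E} (hf : Continuous f) (x : E) {d : T → ℕ → E}
    (hd : ∀ k, Continuous fun t => d t k) (k : ℕ) :
    Continuous fun t => disturbedOrbit f x (d t) k := by
  induction k with
  | zero => exact continuous_const
  | succ k ih => exact (hf.comp ih).add (hd k)

section PerturbedTrajectories

open scoped BoundedContinuousFunction

variable {E : Type*} [SeminormedAddCommGroup E]

/-- The trajectory set `ξ(x, ε)` of `xi`, over an arbitrary seminormed state space. -/
def perturbedTrajectories (N : ℕ) [NeZero N] (f : E → E) (x : E) (ε : ℝ) : Set (Fin N → E) :=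
  {w | w 0 = x ∧ ∀ k : Fin N, ∀ h : (k : ℕ) + 1 < N, ‖w ⟨(k : ℕ) + 1, h⟩ - f (w k)‖ ≤ ε}

variable {N : ℕ} [NeZero N]

theorem disturbedOrbit_mem_perturbedTrajectories (f : E → E) (x : E) {d : ℕ → E} {ε : ℝ}
    (hd : ∀ k, ‖d k‖ ≤ ε) :
    (fun k : Fin N => disturbedOrbit f x d k) ∈ perturbedTrajectories N f x ε :=
  ⟨rfl, fun k _ => by simpa only [disturbedOrbit, add_sub_cancel_left] using hd k⟩

theorem exists_disturbedOrbit_eq_of_mem_perturbedTrajectories {f : E → E} {x : E} {ε : ℝ}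
    (hε : 0 ≤ ε) {w : Fin N → E} (hw : w ∈ perturbedTrajectories N f x ε) :
    ∃ d : ℕ → E, (∀ k, ‖d k‖ ≤ ε) ∧ (fun k : Fin N => disturbedOrbit f x d k) = w := by
  let d : ℕ → E := fun k =>
    if h : k + 1 < N then w ⟨k + 1, h⟩ - f (w ⟨k, k.lt_succ_self.trans h⟩) else 0
  have norm_d_le : ∀ k, ‖d k‖ ≤ ε := fun k => by
    by_cases h : k + 1 < N
    · simpa only [d, dif_pos h] using hw.2 ⟨k, k.lt_succ_self.trans h⟩ h
    · simpa only [d, dif_neg h, norm_zero] using hε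
  have orbit_eq : ∀ k (hk : k < N), disturbedOrbit f x d k = w ⟨k, hk⟩ := by
    intro k
    induction k with
    | zero => exact fun _ => hw.1.symm
    | succ k ih =>
      intro hk
      simp only [disturbedOrbit, ih (k.lt_succ_self.trans hk), d, dif_pos hk, add_sub_cancel]
  exact ⟨d, norm_d_le, funext fun k => orbit_eq k k.isLt⟩

theorem image_closedBall_eq_perturbedTrajectories (f : E → E) (x : E) {ε : ℝ} (hε : 0 ≤ ε) :
    (fun (d : ℕ →ᵇ E) (k : Fin N) => disturbedOrbit f x d k) '' Metric.closedBall 0 ε =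
      perturbedTrajectories N f x ε := by
  apply Subset.antisymm
  · rintro _ ⟨d, hd, rfl⟩
    rw [mem_closedBall_zero_iff, BoundedContinuousFunction.norm_le hε] at hd
    exact disturbedOrbit_mem_perturbedTrajectories f x hd
  · intro w hw
    obtain ⟨d, hd, rfl⟩ := exists_disturbedOrbit_eq_of_mem_perturbedTrajectories hε hw
    refine ⟨.ofNormedAddCommGroupDiscrete d ε hd, ?_, rfl⟩
    rwa [mem_closedBall_zero_iff, BoundedContinuousFunction.norm_le hε]

theorem isClosed_admissible_general [NormedSpace ℝ E] {f : E → E} (hf : Continuous f)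
    {S : Set (Fin N → E)} (hS : IsClosed S) (x : E) :
    IsClosed {ε : ℝ | 0 ≤ ε ∧ perturbedTrajectories N f x ε ⊆ S} := by
  let Φ : (ℕ →ᵇ E) → Fin N → E := fun d k => disturbedOrbit f x d k
  have continuous_Φ : Continuous Φ := continuous_pi fun k =>
    continuous_disturbedOrbit hf x (fun j => continuous_eval_const j) k
  have subset_iff : ∀ ε : ℝ, 0 ≤ ε →
      (perturbedTrajectories N f x ε ⊆ S ↔ Metric.closedBall 0 ε ⊆ Φ ⁻¹' S) := fun ε hε => by
    rw [← image_closedBall_eq_perturbedTrajectories f x hε, image_subset_iff]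
  simp only [and_congr_right (subset_iff _)]
  exact isClosed_setOf_closedBall_subset 0 (hS.preimage continuous_Φ)

end PerturbedTrajectories

/-- Closedness of the set of admissible disturbance bounds: for continuous `f`
and a closed specification `S`, the set `{ε | 0 ≤ ε ∧ ξ(x,ε) ⊆ S}` is closed. -/
theorem isClosed_admissible {n N : ℕ} (hn : 1 ≤ n) [NeZero N]
    (f : (Fin n → ℝ) → (Fin n → ℝ)) (hf : Continuous f)
    (S : Set (Fin N → (Fin n → ℝ))) (hS : IsClosed S) (x : Fin n → ℝ) :
    IsClosed {ε : ℝ | 0 ≤ ε ∧ xi N f x ε ⊆ S} :=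
  isClosed_admissible_general hf hS x

end
end

section
/- Boundedness of the resilience: assume the horizon satisfies N ≥ 2 and there is a bounded set B ⊆ (Fin n → ℝ) such that every trajectory w ∈ S satisfies w k ∈ B for all k ∈ Fin N. Then for every map f and every state x, the set {ε : ℝ | 0 ≤ ε ∧ ξ(x,ε) ⊆ S} is bounded above (hence the resilience of x with respect to S is finite). -/
open Classical Set Filter

noncomputable section

/-!
At a single positive time `k` a disturbance of size at most `ε` can move the state anywhere in the
closed ball of radius `ε` around the undisturbed state `f^[k] x`, so if `S` contains all perturbed
trajectories then the diameter `2 * ε` of this ball is at most that of the set of states of `S` at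
time `k`.
-/

section ResetOrbit

variable {α : Type*} (f : α → α) (x y : α)

/-- The orbit of `x` under `f`, reset to the state `y` at time `k`: the response of the system to a
disturbance that acts only in the step leading to time `k`. -/
def resetOrbit (k j : ℕ) : α :=
  if j < k then f^[j] x else f^[j - k] y

theorem resetOrbit_of_lt {k j : ℕ} (h : j < k) : resetOrbit f x y k j = f^[j] x :=
  if_pos h

theorem resetOrbit_of_le {k j : ℕ} (h : k ≤ j) : resetOrbit f x y k j = f^[j - k] y :=
  if_neg h.not_gt

theorem resetOrbit_self (k : ℕ) : resetOrbit f x y k k = y := by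
  simp [resetOrbit_of_le]

theorem resetOrbit_succ_of_ne {k j : ℕ} (h : j + 1 ≠ k) :
    resetOrbit f x y k (j + 1) = f (resetOrbit f x y k j) := by
  rcases h.lt_or_gt with hlt | hgt
  · rw [resetOrbit_of_lt f x y hlt, resetOrbit_of_lt f x y (j.lt_succ_self.trans hlt),
      Function.iterate_succ_apply']
  · have hle : k ≤ j := Nat.le_of_lt_succ hgt
    rw [resetOrbit_of_le f x y hgt.le, resetOrbit_of_le f x y hle, Nat.succ_sub hle,
      Function.iterate_succ_apply']

end ResetOrbit

section Reachability

variable {n N : ℕ} [NeZero N] (f : (Fin n → ℝ) → (Fin n → ℝ)) (x : Fin n → ℝ)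

theorem resetOrbit_mem_xi {k : ℕ} (hk : k ≠ 0) {y : Fin n → ℝ} {ε : ℝ}
    (hy : ‖y - f^[k] x‖ ≤ ε) : (fun j : Fin N => resetOrbit f x y k j) ∈ xi N f x ε := by
  refine ⟨resetOrbit_of_lt f x y (Nat.pos_of_ne_zero hk), fun j _ => ?_⟩
  by_cases hj : (j : ℕ) + 1 = k
  · subst hj
    simpa only [resetOrbit_self, resetOrbit_of_lt f x y (Nat.lt_succ_self _),
      ← Function.iterate_succ_apply' f] using hy
  · simpa only [resetOrbit_succ_of_ne f x y hj, sub_self, norm_zero] using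
      (norm_nonneg _).trans hy

theorem closedBall_iterate_subset_eval_image_xi {k : Fin N} (hk : k ≠ 0) (ε : ℝ) :
    Metric.closedBall (f^[k] x) ε ⊆ Function.eval k '' xi N f x ε := fun y hy =>
  ⟨fun j => resetOrbit f x y k j,
    resetOrbit_mem_xi f x (Fin.val_ne_zero_iff.mpr hk) (mem_closedBall_iff_norm.mp hy),
    resetOrbit_self f x y k⟩

end Reachability

theorem bddAbove_admissible_general {n N : ℕ} [NeZero n] [NeZero N]
    {S : Set (Fin N → (Fin n → ℝ))} {k : Fin N} (hk : k ≠ 0)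
    (hS : Bornology.IsBounded (Function.eval k '' S))
    (f : (Fin n → ℝ) → (Fin n → ℝ)) (x : Fin n → ℝ) :
    BddAbove {ε : ℝ | 0 ≤ ε ∧ xi N f x ε ⊆ S} := by
  refine ⟨Metric.diam (Function.eval k '' S), fun ε ⟨hε, hxi⟩ => ?_⟩
  have hball : Metric.closedBall (f^[k] x) ε ⊆ Function.eval k '' S :=
    (closedBall_iterate_subset_eval_image_xi f x hk ε).trans (image_mono hxi)
  calc
    ε ≤ 2 * ε := le_mul_of_one_le_left hε one_le_two
    _ = Metric.diam (Metric.closedBall (f^[k] x) ε) := (Metric.diam_closedBall_eq _ hε).symm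
    _ ≤ Metric.diam (Function.eval k '' S) := Metric.diam_mono hball hS

/-- Boundedness of the resilience: if `N ≥ 2` and every trajectory of `S` stays
in a bounded set `B`, then the set of admissible disturbance bounds is bounded
above (hence the resilience is finite). -/
theorem bddAbove_admissible {n N : ℕ} (hn : 1 ≤ n) [NeZero N] (hN : 2 ≤ N)
    (B : Set (Fin n → ℝ)) (hB : Bornology.IsBounded B)
    (S : Set (Fin N → (Fin n → ℝ))) (hSB : ∀ w ∈ S, ∀ k : Fin N, w k ∈ B)
    (f : (Fin n → ℝ) → (Fin n → ℝ)) (x : Fin n → ℝ) :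
    BddAbove {ε : ℝ | 0 ≤ ε ∧ xi N f x ε ⊆ S} := by
  have : NeZero n := ⟨Nat.one_le_iff_ne_zero.mp hn⟩
  exact bddAbove_admissible_general (k := ⟨1, hN⟩) (by simp [Fin.ext_iff])
    (hB.subset (image_subset_iff.mpr fun w hw => hSB w hw _)) f x

end
end

section
/- Theorem 3.8 (resilience over a convex hull for linear systems and convex specifications): let the dynamics be linear, f(z) = A.mulVec z for a matrix A : Matrix (Fin n) (Fin n) ℝ, let S be a convex subset of the real vector space of trajectories Fin N → (Fin n → ℝ), let p ≥ 1 and c : Fin p → (Fin n → ℝ) be finitely many points. Then the infimum of the resilience over the convex hull equals the minimum over the generating points: ⨅ x ∈ convexHull ℝ (Set.range c), g_S(x) = ⨅ i : Fin p, g_S(c i). -/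
open Classical Set Filter

noncomputable section

/-!
For affine dynamics the perturbed trajectories from `x` are those from `0`, translated by the free
trajectory of the linear part, which depends linearly on `x`. Hence for a convex specification the
states that tolerate a given perturbation size form an intersection of preimages of a convex set
under affine maps, so the resilience is quasiconcave, and a quasiconcave function has the same
infimum over a set as over its convex hull.
-/

open scoped NNReal

theorem iInf_convexHull_of_quasiconcaveOn {𝕜 E β : Type*} [Semiring 𝕜] [PartialOrder 𝕜]
    [AddCommMonoid E] [Module 𝕜 E] [CompleteLattice β] {g : E → β}
    (hg : QuasiconcaveOn 𝕜 univ g) (C : Set E) :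
    ⨅ x ∈ convexHull 𝕜 C, g x = ⨅ x ∈ C, g x := by
  apply le_antisymm (biInf_mono (subset_convexHull 𝕜 C))
  have hull_subset : convexHull 𝕜 C ⊆ {x | x ∈ univ ∧ ⨅ y ∈ C, g y ≤ g x} :=
    convexHull_min (fun x hx => ⟨mem_univ x, biInf_le g hx⟩) (hg _)
  exact le_iInf₂ fun x hx => (hull_subset hx).2

/-- The unperturbed trajectory of length `N` of the linear system `x(k+1) = L (x k)`, as a linear
function of the initial state. -/
def freeTrajectory {R M : Type*} [Semiring R] [AddCommMonoid M] [Module R M] (N : ℕ)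
    (L : Module.End R M) : M →ₗ[R] (Fin N → M) :=
  LinearMap.pi fun k => L ^ (k : ℕ)

section Resilience

variable {n N : ℕ} [NeZero N]

theorem xi_mono (f : (Fin n → ℝ) → (Fin n → ℝ)) (x : Fin n → ℝ) : Monotone (xi N f x) :=
  fun _ _ hε _ hw => ⟨hw.1, fun k hk => (hw.2 k hk).trans hε⟩

theorem coe_le_gres {f : (Fin n → ℝ) → (Fin n → ℝ)} {S : Set (Fin N → (Fin n → ℝ))}
    {x : Fin n → ℝ} {ε : ℝ≥0} (h : xi N f x ε ⊆ S) : (ε : ENNReal) ≤ gres f S x := by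
  rw [gres, if_pos ((xi_mono f x ε.coe_nonneg).trans h)]
  exact le_sSup ⟨ε, ε.coe_nonneg, ENNReal.ofReal_coe_nnreal.symm, h⟩

theorem xi_subset_of_coe_lt_gres {f : (Fin n → ℝ) → (Fin n → ℝ)}
    {S : Set (Fin N → (Fin n → ℝ))} {x : Fin n → ℝ} {ε : ℝ≥0}
    (h : (ε : ENNReal) < gres f S x) : xi N f x ε ⊆ S := by
  unfold gres at h
  split_ifs at h
  · obtain ⟨_, ⟨δ, -, rfl, hδ⟩, hlt⟩ := lt_sSup_iff.1 h
    have hεδ : (ε : ℝ) < δ := Real.lt_toNNReal_iff_coe_lt.1 (ENNReal.coe_lt_coe.1 hlt)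
    exact (xi_mono f x hεδ.le).trans hδ
  · exact absurd h not_lt_zero

theorem le_gres_iff {f : (Fin n → ℝ) → (Fin n → ℝ)} {S : Set (Fin N → (Fin n → ℝ))}
    {x : Fin n → ℝ} {r : ENNReal} :
    r ≤ gres f S x ↔ ∀ ε : ℝ≥0, (ε : ENNReal) < r → xi N f x ε ⊆ S :=
  ⟨fun hr _ hε => xi_subset_of_coe_lt_gres (hε.trans_le hr),
    fun h => ENNReal.le_of_forall_nnreal_lt fun ε hε => coe_le_gres (h ε hε)⟩

theorem add_freeTrajectory_mem_xi_iff (f : (Fin n → ℝ) →ᵃ[ℝ] (Fin n → ℝ)) (x v : Fin n → ℝ)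
    (ε : ℝ) (w : Fin N → (Fin n → ℝ)) :
    w + freeTrajectory N f.linear v ∈ xi N f (x + v) ε ↔ w ∈ xi N f x ε := by
  have map_add (y u : Fin n → ℝ) : f (y + u) = f y + f.linear u := by
    simpa only [vadd_eq_add, add_comm] using f.map_vadd y u
  simp [xi, freeTrajectory, map_add, pow_succ']

theorem xi_subset_iff_forall_mem_xi_zero (f : (Fin n → ℝ) →ᵃ[ℝ] (Fin n → ℝ))
    (S : Set (Fin N → (Fin n → ℝ))) (x : Fin n → ℝ) (ε : ℝ) :
    xi N f x ε ⊆ S ↔ ∀ w ∈ xi N f 0 ε, w + freeTrajectory N f.linear x ∈ S := by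
  rw [Set.subset_def, ← (Equiv.addRight (freeTrajectory N f.linear x)).forall_congr_right]
  refine forall_congr' fun w => imp_congr_left ?_
  simpa using add_freeTrajectory_mem_xi_iff f 0 x ε w

theorem convex_setOf_xi_subset (f : (Fin n → ℝ) →ᵃ[ℝ] (Fin n → ℝ))
    {S : Set (Fin N → (Fin n → ℝ))} (hS : Convex ℝ S) (ε : ℝ) :
    Convex ℝ {x | xi N f x ε ⊆ S} := by
  simp only [xi_subset_iff_forall_mem_xi_zero, ofPred_forall]
  exact convex_iInter₂ fun w _ =>
    (hS.translate_preimage_right w).linear_preimage (freeTrajectory N f.linear)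

theorem quasiconcaveOn_gres (f : (Fin n → ℝ) →ᵃ[ℝ] (Fin n → ℝ))
    {S : Set (Fin N → (Fin n → ℝ))} (hS : Convex ℝ S) :
    QuasiconcaveOn ℝ univ (gres f S) := by
  intro r
  simp only [mem_univ, true_and, le_gres_iff, ofPred_forall]
  exact convex_iInter₂ fun ε _ => convex_setOf_xi_subset f hS ε

theorem gres_convexHull_general (f : (Fin n → ℝ) →ᵃ[ℝ] (Fin n → ℝ))
    {S : Set (Fin N → (Fin n → ℝ))} (hS : Convex ℝ S) (C : Set (Fin n → ℝ)) :
    ⨅ x ∈ convexHull ℝ C, gres f S x = ⨅ x ∈ C, gres f S x :=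
  iInf_convexHull_of_quasiconcaveOn (quasiconcaveOn_gres f hS) C

end Resilience

/-- Theorem 3.8: for linear dynamics and a convex specification, the infimum of
the resilience over the convex hull of finitely many points equals the minimum
of the resiliences at these points. -/
theorem gres_convexHull {n N : ℕ} (hn : 1 ≤ n) [NeZero N]
    (A : Matrix (Fin n) (Fin n) ℝ)
    (S : Set (Fin N → (Fin n → ℝ))) (hS : Convex ℝ S)
    (p : ℕ) (hp : 1 ≤ p) (c : Fin p → (Fin n → ℝ)) :
    ⨅ x ∈ convexHull ℝ (Set.range c), gres (fun z => A.mulVec z) S x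
      = ⨅ i : Fin p, gres (fun z => A.mulVec z) S (c i) :=
  (gres_convexHull_general A.mulVecLin.toAffineMap hS (range c)).trans iInf_range

end
end

section
/- Convex-hull containment of perturbed trajectory sets for linear systems (key step of Theorem 3.8): let f(z) = A.mulVec z for A : Matrix (Fin n) (Fin n) ℝ, let p ≥ 1, c : Fin p → (Fin n → ℝ), and let α : Fin p → ℝ satisfy α i ≥ 0 for all i and ∑ i, α i = 1. Then for x = ∑ i, α i • c i and every ε ≥ 0, ξ(x,ε) ⊆ convexHull ℝ (⋃ i, ξ(c i, ε)). -/
open Classical Set Filter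

noncomputable section

/-- The unforced trajectory `(v, L v, …, L ^ (N - 1) v)` of the linear system `x (k+1) = L (x k)`,
as a linear function of its initial state `v`. -/
def freeResponse {R V : Type*} [CommSemiring R] [AddCommMonoid V] [Module R V] (N : ℕ)
    (L : Module.End R V) : V →ₗ[R] (Fin N → V) :=
  LinearMap.pi fun k => L ^ (k : ℕ)

theorem add_freeResponse_mem_xi {n N : ℕ} [NeZero N]
    {f : (Fin n → ℝ) →ᵃ[ℝ] (Fin n → ℝ)} {x : Fin n → ℝ} {ε : ℝ} {w : Fin N → (Fin n → ℝ)}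
    (hw : w ∈ xi N f x ε) (v : Fin n → ℝ) :
    w + freeResponse N f.linear v ∈ xi N f (x + v) ε := by
  obtain ⟨hw_zero, hw_step⟩ := hw
  refine ⟨by simp [freeResponse, hw_zero], fun k hk => ?_⟩
  have f_add (u d : Fin n → ℝ) : f (u + d) = f u + f.linear d := by
    simpa [add_comm] using f.map_vadd u d
  simpa [freeResponse, f_add, pow_succ'] using hw_step k hk

-- Keeping the perturbations of a trajectory `w` from `x` and moving its initial state to `y` gives
-- a trajectory `φ y` that is affine in `y`, and affine maps commute with convex hulls.
theorem xi_subset_convexHull_general {n N : ℕ} [NeZero N]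
    (f : (Fin n → ℝ) →ᵃ[ℝ] (Fin n → ℝ)) {s : Set (Fin n → ℝ)} {x : Fin n → ℝ}
    (hx : x ∈ convexHull ℝ s) (ε : ℝ) :
    xi N f x ε ⊆ convexHull ℝ (⋃ y ∈ s, xi N f y ε) := by
  intro w hw
  let T := freeResponse N f.linear
  let φ : (Fin n → ℝ) →ᵃ[ℝ] (Fin N → (Fin n → ℝ)) :=
    T.toAffineMap + AffineMap.const ℝ _ (w - T x)
  have φ_apply (y : Fin n → ℝ) : φ y = w + T (y - x) := by
    simp only [φ, AffineMap.coe_add, Pi.add_apply, LinearMap.coe_toAffineMap,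
      AffineMap.const_apply, map_sub]
    abel
  have φ_mem_xi (y : Fin n → ℝ) : φ y ∈ xi N f y ε := by
    simpa only [φ_apply, add_sub_cancel] using add_freeResponse_mem_xi hw (y - x)
  have φ_x : φ x = w := by simp only [φ_apply, sub_self, map_zero, add_zero]
  have φ_image_subset : φ '' s ⊆ ⋃ y ∈ s, xi N f y ε :=
    image_subset_iff.2 fun y hy => mem_biUnion hy (φ_mem_xi y)
  have w_mem : w ∈ convexHull ℝ (φ '' s) :=
    φ.image_convexHull s ▸ ⟨x, hx, φ_x⟩
  exact convexHull_mono φ_image_subset w_mem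

/-- Convex-hull containment of perturbed trajectory sets for linear systems:
if `x` is a convex combination of the points `c i`, then every `ε`-perturbed
trajectory from `x` lies in the convex hull of the `ε`-perturbed trajectories
from the points `c i`. -/
theorem xi_subset_convexHull {n N : ℕ} (hn : 1 ≤ n) [NeZero N]
    (A : Matrix (Fin n) (Fin n) ℝ)
    (p : ℕ) (hp : 1 ≤ p) (c : Fin p → (Fin n → ℝ)) (α : Fin p → ℝ)
    (hα : ∀ i, 0 ≤ α i) (hsum : ∑ i, α i = 1) (ε : ℝ) (hε : 0 ≤ ε) :
    xi N (fun z => A.mulVec z) (∑ i, α i • c i) ε ⊆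
      convexHull ℝ (⋃ i : Fin p, xi N (fun z => A.mulVec z) (c i) ε) := by
  have hx : ∑ i, α i • c i ∈ convexHull ℝ (range c) :=
    mem_convexHull_of_exists_fintype α c hα hsum (fun i => mem_range_self i) rfl
  rw [← biUnion_range (g := fun y => xi N _ y ε)]
  exact xi_subset_convexHull_general A.mulVecLin.toAffineMap hx ε

end
end

section
/- Affine Farkas lemma in matrix form (Appendix Theorem): let A : Matrix (Fin m) (Fin n) ℝ, b : Fin m → ℝ, E : Matrix (Fin q) (Fin n) ℝ, F : Fin q → ℝ, and suppose there exists x with A.mulVec x ≤ b componentwise. Then the following are equivalent: (1) for every x : Fin n → ℝ, A.mulVec x ≤ b implies E.mulVec x ≤ F (both componentwise); (2) there exists a matrix P : Matrix (Fin q) (Fin m) ℝ with all entries nonnegative such that P * A = E and P.mulVec b ≤ F componentwise. -/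
/-!
Farkas' lemma for finitely many functionals is proved by induction on their number. If the new
functional `a j` is really needed, restricting to its kernel expresses `c` as a nonnegative
combination of the other functionals plus a multiple `μ • a j`; at a point where `c` is positive
and the other functionals are nonpositive, this identity forces `0 ≤ μ`. The affine version is the
linear one on `V × K`, applied to the homogenized inequalities `a i x ≤ t * b i` and `0 ≤ t`, and
the matrix version is the affine one for each row of `E`.
-/

open Matrix Module

section Functionals

variable {K V ι : Type*} [Field K] [LinearOrder K] [IsStrictOrderedRing K]
  [AddCommGroup V] [Module K V]

theorem exists_nonneg_eq_smul_of_ker_le_ker {f g : Dual K V} (hker : f.ker ≤ g.ker) {x₀ : V}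
    (hf : 0 < f x₀) (hg : 0 ≤ g x₀) : ∃ μ : K, 0 ≤ μ ∧ g = μ • f := by
  have hspan : g ∈ Submodule.span K (Set.range fun _ : Unit => f) :=
    mem_span_of_iInf_ker_le_ker (by simpa using hker)
  rw [Set.range_const, Submodule.mem_span_singleton] at hspan
  obtain ⟨μ, rfl⟩ := hspan
  exact ⟨μ, nonneg_of_mul_nonneg_left hg hf, rfl⟩

theorem exists_nonneg_sum_smul_eq_of_forall_nonpos (s : Finset ι) (a : ι → Dual K V)
    (c : Dual K V) (h : ∀ x, (∀ i ∈ s, a i x ≤ 0) → c x ≤ 0) :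
    ∃ l : ι → K, 0 ≤ l ∧ ∑ i ∈ s, l i • a i = c := by
  classical
  induction s using Finset.induction_on generalizing V with
  | empty =>
    have hc : ∀ x, c x ≤ 0 := fun x => h x (by simp)
    exact ⟨0, le_rfl, LinearMap.ext fun x => by
      simpa using le_antisymm (by simpa using hc (-x)) (hc x)⟩
  | insert j s hj ih =>
    simp only [Finset.forall_mem_insert] at h
    suffices ∃ l : ι → K, 0 ≤ l ∧ ∃ μ : K, 0 ≤ μ ∧ c - ∑ i ∈ s, l i • a i = μ • a j by
      obtain ⟨l, hl, μ, hμ, hc⟩ := this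
      refine ⟨Function.update l j μ, le_update_iff.2 ⟨hμ, fun i _ => hl i⟩, ?_⟩
      have hs : ∑ i ∈ s, Function.update l j μ i • a i = ∑ i ∈ s, l i • a i :=
        Finset.sum_congr rfl fun i hi => by
          rw [Function.update_of_ne (ne_of_mem_of_not_mem hi hj)]
      rw [Finset.sum_insert hj, Function.update_self, hs, ← hc, sub_add_cancel]
    by_cases hredundant : ∀ x, (∀ i ∈ s, a i x ≤ 0) → c x ≤ 0
    · obtain ⟨l, hl, hc⟩ := ih a c hredundant
      exact ⟨l, hl, 0, le_rfl, by rw [hc, sub_self, zero_smul]⟩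
    push Not at hredundant
    obtain ⟨x₀, hax₀, hcx₀⟩ := hredundant
    obtain ⟨l, hl, hrestrict⟩ := ih (fun i => (a i).domRestrict (a j).ker)
      (c.domRestrict (a j).ker) fun x hx => h x ⟨(LinearMap.mem_ker.1 x.2).le, hx⟩
    refine ⟨l, hl, exists_nonneg_eq_smul_of_ker_le_ker (x₀ := x₀) (fun x hx => ?_) ?_ ?_⟩
    · have hx_eq : ∑ i ∈ s, l i * a i x = c x := by
        simpa using LinearMap.congr_fun hrestrict ⟨x, hx⟩
      simp [hx_eq]
    · exact lt_of_not_ge fun hle => hcx₀.not_ge (h x₀ ⟨hle, hax₀⟩)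
    · have hsum : ∑ i ∈ s, l i * a i x₀ ≤ 0 :=
        Finset.sum_nonpos fun i hi => mul_nonpos_of_nonneg_of_nonpos (hl i) (hax₀ i hi)
      simpa using hsum.trans hcx₀.le

theorem le_mul_of_forall_le_imp_le {a : ι → Dual K V} {b : ι → K} {e : Dual K V} {f : K}
    (hfeas : ∃ x, ∀ i, a i x ≤ b i) (h : ∀ x, (∀ i, a i x ≤ b i) → e x ≤ f)
    {x : V} {t : K} (ht : 0 ≤ t) (hx : ∀ i, a i x ≤ t * b i) : e x ≤ t * f := by
  obtain ⟨x₀, hx₀⟩ := hfeas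
  -- Moving `(x, t)` slightly towards `(x₀, 1)` makes `t` positive, so that one can divide by it.
  have hperturbed : ∀ ε > 0, e x + ε * e x₀ ≤ (t + ε) * f := fun ε hε => by
    have hpos : 0 < t + ε := by positivity
    have hscaled := h ((t + ε)⁻¹ • (x + ε • x₀)) fun i => by
      rw [map_smul, smul_eq_mul, inv_mul_le_iff₀ hpos, map_add, map_smul, smul_eq_mul, add_mul]
      exact add_le_add (hx i) (mul_le_mul_of_nonneg_left (hx₀ i) hε.le)
    rwa [map_smul, smul_eq_mul, inv_mul_le_iff₀ hpos, map_add, map_smul, smul_eq_mul] at hscaled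
  by_contra! hlt
  obtain ⟨ε, hε, hsmall⟩ := exists_pos_mul_lt (sub_pos.2 hlt) (f - e x₀)
  linarith [hperturbed ε hε]

theorem exists_nonneg_sum_smul_eq_of_forall_le [Fintype ι] (a : ι → Dual K V) (b : ι → K)
    (e : Dual K V) (f : K) (hfeas : ∃ x, ∀ i, a i x ≤ b i)
    (h : ∀ x, (∀ i, a i x ≤ b i) → e x ≤ f) :
    ∃ l : ι → K, 0 ≤ l ∧ ∑ i, l i • a i = e ∧ l ⬝ᵥ b ≤ f := by
  let homogenize (g : Dual K V) (r : K) : Dual K (V × K) :=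
    g ∘ₗ LinearMap.fst K V K - r • LinearMap.snd K V K
  have homogenize_apply (g r x t) : homogenize g r (x, t) = g x - t * r := by
    simp [homogenize, mul_comm]
  obtain ⟨l, hl, hsum⟩ := exists_nonneg_sum_smul_eq_of_forall_nonpos Finset.univ
    (fun o : Option ι => o.elim (homogenize 0 1) fun i => homogenize (a i) (b i))
    (homogenize e f) fun ⟨x, t⟩ hx => by
      have ht : 0 ≤ t := by simpa [homogenize_apply] using hx none
      have hax : ∀ i, a i x ≤ t * b i := fun i => by
        simpa [homogenize_apply] using hx (some i)
      rw [homogenize_apply, sub_nonpos]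
      exact le_mul_of_forall_le_imp_le hfeas h ht hax
  have heval (x t) : -(l none * t) + ∑ i, l (some i) * (a i x - t * b i) = e x - t * f := by
    simpa [Fintype.sum_option, homogenize_apply] using LinearMap.congr_fun hsum (x, t)
  refine ⟨fun i => l (some i), fun i => hl (some i), LinearMap.ext fun x => ?_, ?_⟩
  · simpa using heval x 0
  · have hconst : l none + ∑ i, l (some i) * b i = f := by
      have := heval 0 1
      simp only [map_zero, mul_one, one_mul, zero_sub, mul_neg, Finset.sum_neg_distrib] at this
      linarith
    exact hconst ▸ le_add_of_nonneg_left (hl none)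

end Functionals

section Matrices

variable {K m n q : Type*} [Field K] [LinearOrder K] [IsStrictOrderedRing K]
  [Fintype m] [Fintype n]

theorem forall_mulVec_le_imp_dotProduct_le_iff (A : Matrix m n K) (b : m → K) (e : n → K) (f : K)
    (hfeas : ∃ x, A *ᵥ x ≤ b) :
    (∀ x, A *ᵥ x ≤ b → e ⬝ᵥ x ≤ f) ↔ ∃ l : m → K, 0 ≤ l ∧ l ᵥ* A = e ∧ l ⬝ᵥ b ≤ f := by
  classical
  constructor
  · intro h
    obtain ⟨l, hl, hsum, hlb⟩ := exists_nonneg_sum_smul_eq_of_forall_le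
      (fun i => dotProductEquiv K n (A i)) b (dotProductEquiv K n e) f hfeas h
    refine ⟨l, hl, (dotProductEquiv K n).injective ?_, hlb⟩
    simpa only [vecMul_eq_sum, map_sum, map_smul] using hsum
  · rintro ⟨l, hl, rfl, hlb⟩ x hx
    calc (l ᵥ* A) ⬝ᵥ x = l ⬝ᵥ A *ᵥ x := (dotProduct_mulVec l A x).symm
      _ ≤ l ⬝ᵥ b := dotProduct_le_dotProduct_of_nonneg_left hx hl
      _ ≤ f := hlb

theorem farkas_affine_matrix_general (A : Matrix m n K) (b : m → K) (E : Matrix q n K)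
    (F : q → K) (hfeas : ∃ x, A *ᵥ x ≤ b) :
    (∀ x, A *ᵥ x ≤ b → E *ᵥ x ≤ F) ↔
      ∃ P : Matrix q m K, (∀ i j, 0 ≤ P i j) ∧ P * A = E ∧ P *ᵥ b ≤ F :=
  calc (∀ x, A *ᵥ x ≤ b → E *ᵥ x ≤ F)
    _ ↔ ∀ k, ∀ x, A *ᵥ x ≤ b → E k ⬝ᵥ x ≤ F k :=
      ⟨fun h k x hx => h x hx k, fun h x hx k => h k x hx⟩
    _ ↔ ∀ k, ∃ l : m → K, 0 ≤ l ∧ l ᵥ* A = E k ∧ l ⬝ᵥ b ≤ F k :=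
      forall_congr' fun k => forall_mulVec_le_imp_dotProduct_le_iff A b (E k) (F k) hfeas
    _ ↔ ∃ P : Matrix q m K, ∀ k, 0 ≤ P k ∧ P k ᵥ* A = E k ∧ P k ⬝ᵥ b ≤ F k :=
      Classical.skolem
    _ ↔ ∃ P : Matrix q m K, (∀ i j, 0 ≤ P i j) ∧ P * A = E ∧ P *ᵥ b ≤ F :=
      exists_congr fun _ => ⟨
        fun h => ⟨fun k => (h k).1, funext fun k => (h k).2.1, fun k => (h k).2.2⟩,
        fun ⟨hP, hPA, hPb⟩ k => ⟨hP k, congr_fun hPA k, hPb k⟩⟩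

end Matrices

/-- Affine form of Farkas' lemma in matrix form: if `{x | A x ≤ b}` is nonempty,
then `A x ≤ b → E x ≤ F` for all `x` iff there is an entrywise nonnegative
matrix `P` with `P A = E` and `P b ≤ F`. -/
theorem farkas_affine_matrix {m n q : ℕ}
    (A : Matrix (Fin m) (Fin n) ℝ) (b : Fin m → ℝ)
    (E : Matrix (Fin q) (Fin n) ℝ) (F : Fin q → ℝ)
    (hfeas : ∃ x : Fin n → ℝ, A.mulVec x ≤ b) :
    (∀ x : Fin n → ℝ, A.mulVec x ≤ b → E.mulVec x ≤ F) ↔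
      ∃ P : Matrix (Fin q) (Fin m) ℝ,
        (∀ i j, 0 ≤ P i j) ∧ P * A = E ∧ P.mulVec b ≤ F :=
  farkas_affine_matrix_general A b E F hfeas
end

section
/- Theorem 4.1 (exact-time reachability for linear systems, Farkas characterization): fix A : Matrix (Fin n) (Fin n) ℝ, a polytope Γ given by G : Matrix (Fin q) (Fin n) ℝ and H : Fin q → ℝ, a horizon N ≥ 1, a state x : Fin n → ℝ, and a real ε > 0. Let E : Matrix (Fin q) (Fin N × Fin n) ℝ be the block matrix whose column block indexed by k ∈ Fin N is G * A^(N-1-k); let A_b : Matrix ((Fin N × Fin n) ⊕ (Fin N × Fin n)) (Fin N × Fin n) ℝ be the vertical stack of the identity matrix and its negation, and let B_b be the all-ones vector on (Fin N × Fin n) ⊕ (Fin N × Fin n). Then the following are equivalent: (1) for every disturbance sequence d : Fin N → (Fin n → ℝ) with ‖d k‖_∞ ≤ ε for all k, one has G.mulVec ((A^N).mulVec x + ∑ k : Fin N, (A^(N-1-k)).mulVec (d k)) ≤ H componentwise; (2) there exists a matrix P : Matrix (Fin q) ((Fin N × Fin n) ⊕ (Fin N × Fin n)) ℝ with all entries nonnegative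 such that P * A_b = E and P.mulVec B_b ≤ ε⁻¹ • (H - G.mulVec ((A^N).mulVec x)) componentwise. -/
/-!
After rescaling by `ε` and concatenating the disturbances into one vector `v`, reachability says
that `M v ≤ c` on the unit box `{v | A_b v ≤ 1}`, with `M` the block matrix `E` and
`c = ε⁻¹ (H - G A^N x)`. Multiplying `A_b v ≤ 1` by a nonnegative `P` with `P A_b = M` gives
`M v ≤ P 1`, so Farkas multipliers are sufficient. For necessity, the positive and negative parts of
`M` form a multiplier `P = (M⁺ | M⁻)`, and the `i`-th entry of `P 1` is the `ℓ¹` norm of the `i`-th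
row of `M`, which is the value of `(M v) i` at the sign vector of that row.
-/

open Matrix

/-- The constraint matrix `A_b = [1; -1]` of the unit box `{v | A_b v ≤ 1}`. -/
def boxConstraints (n R : Type*) [DecidableEq n] [Ring R] : Matrix (n ⊕ n) n R :=
  fromRows 1 (-1 : Matrix n n R)

theorem boxConstraints_mulVec_le_one_iff {n R : Type*} [Fintype n] [DecidableEq n] [Ring R]
    [Lattice R] {v : n → R} :
    boxConstraints n R *ᵥ v ≤ 1 ↔ ∀ j, |v j| ≤ 1 := by
  rw [boxConstraints, fromRows_mulVec, one_mulVec, neg_mulVec, one_mulVec, Sum.elim_le_one_iff]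
  simp only [Pi.le_def, Pi.neg_apply, Pi.one_apply, abs_le', forall_and]

theorem mulVec_le_mulVec_of_nonneg {m n R : Type*} [Fintype n] [Semiring R] [PartialOrder R]
    [IsOrderedRing R] {P : Matrix m n R} (hP : ∀ i j, 0 ≤ P i j) {v w : n → R} (hvw : v ≤ w) :
    P *ᵥ v ≤ P *ᵥ w :=
  fun i => dotProduct_le_dotProduct_of_nonneg_left hvw (hP i)

theorem exists_abs_le_one_dotProduct_eq_sum_abs {n R : Type*} [Fintype n] [Ring R]
    [LinearOrder R] [IsStrictOrderedRing R] (a : n → R) :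
    ∃ v : n → R, (∀ j, |v j| ≤ 1) ∧ a ⬝ᵥ v = ∑ j, |a j| := by
  refine ⟨fun j => (SignType.sign (a j) : R), fun j => ?_,
    Finset.sum_congr rfl fun j _ => self_mul_sign (a j)⟩
  rcases lt_trichotomy (a j) 0 with neg | zero | pos
  · simp [sign_neg neg]
  · simp [zero]
  · simp [sign_pos pos]

/-- The multiplier `(M⁺ | M⁻)` of the constraints `A_b v ≤ 1`, with entrywise positive and negative
parts; among the nonnegative `P` with `P A_b = M` it has the least row sums. -/
def boxMultiplier {m n R : Type*} [Lattice R] [AddGroup R] (M : Matrix m n R) :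
    Matrix m (n ⊕ n) R :=
  fromCols (M.map (·⁺)) (M.map (·⁻))

theorem boxMultiplier_nonneg {m n R : Type*} [Lattice R] [AddGroup R] (M : Matrix m n R)
    (i : m) (j : n ⊕ n) : 0 ≤ boxMultiplier M i j := by
  cases j with
  | inl j => exact posPart_nonneg (M i j)
  | inr j => exact negPart_nonneg (M i j)

theorem boxMultiplier_mul_boxConstraints {m n R : Type*} [Fintype n] [DecidableEq n] [Ring R]
    [Lattice R] [IsOrderedAddMonoid R] (M : Matrix m n R) :
    boxMultiplier M * boxConstraints n R = M := by
  rw [boxMultiplier, boxConstraints, fromCols_mul_fromRows, Matrix.mul_one, Matrix.mul_neg,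
    Matrix.mul_one, ← sub_eq_add_neg]
  ext i j
  exact posPart_sub_negPart (M i j)

theorem boxMultiplier_mulVec_one {m n R : Type*} [Fintype n] [Ring R] [Lattice R]
    [IsOrderedAddMonoid R] (M : Matrix m n R) :
    boxMultiplier M *ᵥ 1 = fun i => ∑ j, |M i j| := by
  ext i
  simp only [boxMultiplier, mulVec, dotProduct_one, Fintype.sum_sum_type, fromCols_apply_inl,
    fromCols_apply_inr, map_apply, ← Finset.sum_add_distrib, posPart_add_negPart]

theorem forall_abs_le_one_mulVec_le_iff_exists_nonneg {m n R : Type*} [Fintype n] [DecidableEq n]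
    [Ring R] [LinearOrder R] [IsStrictOrderedRing R] (M : Matrix m n R) (c : m → R) :
    (∀ v : n → R, (∀ j, |v j| ≤ 1) → M *ᵥ v ≤ c) ↔
      ∃ P : Matrix m (n ⊕ n) R,
        (∀ i j, 0 ≤ P i j) ∧ P * boxConstraints n R = M ∧ P *ᵥ 1 ≤ c := by
  constructor
  · intro h
    refine ⟨boxMultiplier M, boxMultiplier_nonneg M, boxMultiplier_mul_boxConstraints M,
      fun i => ?_⟩
    obtain ⟨v, hv, hMv⟩ := exists_abs_le_one_dotProduct_eq_sum_abs (M i)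
    calc (boxMultiplier M *ᵥ 1) i
        = ∑ j, |M i j| := congrFun (boxMultiplier_mulVec_one M) i
      _ = (M *ᵥ v) i := hMv.symm
      _ ≤ c i := h v hv i
  · rintro ⟨P, hP, rfl, hc⟩ v hv
    calc (P * boxConstraints n R) *ᵥ v
        = P *ᵥ (boxConstraints n R *ᵥ v) := (mulVec_mulVec ..).symm
      _ ≤ P *ᵥ 1 := mulVec_le_mulVec_of_nonneg hP (boxConstraints_mulVec_le_one_iff.mpr hv)
      _ ≤ c := hc

theorem forall_abs_le_mulVec_le_iff_forall_abs_le_one {m n K : Type*} [Fintype n] [Field K]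
    [LinearOrder K] [IsStrictOrderedRing K] (M : Matrix m n K) (c : m → K) {ε : K} (hε : 0 < ε) :
    (∀ v : n → K, (∀ j, |v j| ≤ ε) → M *ᵥ v ≤ c) ↔
      ∀ u : n → K, (∀ j, |u j| ≤ 1) → M *ᵥ u ≤ ε⁻¹ • c := by
  have abs_smul_le_iff (u : n → K) (j : n) : |(ε • u) j| ≤ ε ↔ |u j| ≤ 1 := by
    rw [Pi.smul_apply, smul_eq_mul, abs_mul, abs_of_pos hε, mul_le_iff_le_one_right hε]
  have smul_surjective : Function.Surjective fun u : n → K => ε • u :=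
    MulAction.surjective₀ hε.ne'
  rw [smul_surjective.forall]
  simp only [abs_smul_le_iff, mulVec_smul, le_inv_smul_iff_of_pos hε]

/-- The horizontal concatenation of the column blocks `M k`. Column `(k, j)` is column `j` of
`M k`. -/
def blockRow {m κ η R : Type*} (M : κ → Matrix m η R) : Matrix m (κ × η) R :=
  of fun i kj => M kj.1 i kj.2

theorem blockRow_mulVec_uncurry {m κ η R : Type*} [Fintype κ] [Fintype η]
    [NonUnitalNonAssocSemiring R] (M : κ → Matrix m η R) (d : κ → η → R) :
    blockRow M *ᵥ Function.uncurry d = ∑ k, M k *ᵥ d k := by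
  ext i
  simp only [blockRow, mulVec, dotProduct, of_apply, Fintype.sum_prod_type, Finset.sum_apply,
    Function.uncurry_apply_pair]

theorem mulVec_add_sum_mulVec {m ι κ η R : Type*} [Fintype ι] [Fintype κ] [Fintype η]
    [NonUnitalSemiring R] (G : Matrix m ι R) (y : ι → R) (B : κ → Matrix ι η R) (d : κ → η → R) :
    G *ᵥ (y + ∑ k, B k *ᵥ d k) =
      G *ᵥ y + blockRow (fun k => G * B k) *ᵥ Function.uncurry d := by
  simp only [mulVec_add, mulVec_sum, mulVec_mulVec, blockRow_mulVec_uncurry]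

theorem exact_time_reachability_farkas_general {m ι κ η K : Type*} [Fintype ι] [Fintype κ]
    [DecidableEq κ] [Fintype η] [DecidableEq η] [Field K] [LinearOrder K] [IsStrictOrderedRing K]
    (G : Matrix m ι K) (H : m → K) (y : ι → K) (B : κ → Matrix ι η K) {ε : K} (hε : 0 < ε) :
    (∀ d : κ → η → K, (∀ k j, |d k j| ≤ ε) → G *ᵥ (y + ∑ k, B k *ᵥ d k) ≤ H) ↔
      ∃ P : Matrix m ((κ × η) ⊕ (κ × η)) K, (∀ i j, 0 ≤ P i j) ∧
        P * boxConstraints (κ × η) K = blockRow (fun k => G * B k) ∧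
        P *ᵥ 1 ≤ ε⁻¹ • (H - G *ᵥ y) := by
  calc
    _ ↔ ∀ v : κ × η → K, (∀ kj, |v kj| ≤ ε) →
          blockRow (fun k => G * B k) *ᵥ v ≤ H - G *ᵥ y := by
      simp only [(Equiv.curry κ η K).forall_congr_left, mulVec_add_sum_mulVec, le_sub_iff_add_le',
        Prod.forall, Equiv.curry_symm_apply, Function.uncurry_apply_pair]
    _ ↔ ∀ u : κ × η → K, (∀ kj, |u kj| ≤ 1) →
          blockRow (fun k => G * B k) *ᵥ u ≤ ε⁻¹ • (H - G *ᵥ y) :=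
      forall_abs_le_mulVec_le_iff_forall_abs_le_one _ _ hε
    _ ↔ _ := forall_abs_le_one_mulVec_le_iff_exists_nonneg _ _

/-- Theorem 4.1 (exact-time reachability for linear systems, Farkas
characterization). Condition (1): every disturbance sequence of sup-norm at
most `ε` keeps the state at time `N` in the polytope `{y | G y ≤ H}`.
Condition (2): existence of a nonnegative Farkas multiplier matrix `P` with
`P * A_b = E` and `P B_b ≤ ε⁻¹ (H - G A^N x)`, where `A_b` stacks the identity
and its negation, `B_b` is the all-ones vector, and the column block `k` of `E`
is `G * A^(N-1-k)`. -/
theorem exact_time_reachability_farkas {n q N : ℕ} (hN : 1 ≤ N)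
    (A : Matrix (Fin n) (Fin n) ℝ)
    (G : Matrix (Fin q) (Fin n) ℝ) (H : Fin q → ℝ)
    (x : Fin n → ℝ) (ε : ℝ) (hε : 0 < ε) :
    (∀ d : Fin N → (Fin n → ℝ), (∀ k, ‖d k‖ ≤ ε) →
        G.mulVec ((A ^ N).mulVec x
          + ∑ k : Fin N, (A ^ (N - 1 - (k : ℕ))).mulVec (d k)) ≤ H) ↔
      ∃ P : Matrix (Fin q) ((Fin N × Fin n) ⊕ (Fin N × Fin n)) ℝ,
        (∀ i j, 0 ≤ P i j) ∧
        P * Matrix.fromRows (1 : Matrix (Fin N × Fin n) (Fin N × Fin n) ℝ) (-1)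
          = Matrix.of (fun i kj => (G * A ^ (N - 1 - (kj.1 : ℕ))) i kj.2) ∧
        P.mulVec (fun _ => 1) ≤ ε⁻¹ • (H - G.mulVec ((A ^ N).mulVec x)) := by
  simp only [pi_norm_le_iff_of_nonneg hε.le, Real.norm_eq_abs]
  exact exact_time_reachability_farkas_general G H ((A ^ N).mulVec x) _ hε
end

section
/- Theorem 4.3 (finite-horizon safety for linear systems, Farkas characterization): fix A : Matrix (Fin n) (Fin n) ℝ, a polytope Γ given by G : Matrix (Fin q) (Fin n) ℝ and H : Fin q → ℝ, a horizon N ≥ 1, a state x : Fin n → ℝ, and a real ε > 0. Let E : Matrix (Fin N × Fin q) (Fin N × Fin n) ℝ be the lower block-triangular matrix whose block in row block i ∈ Fin N and column block k ∈ Fin N equals G * A^(i-k) if k ≤ i and the zero matrix otherwise; let F : Fin N × Fin q → ℝ be the stacked vector whose block i equals H - G.mulVec ((A^(i+1)).mulVec x); let A_b : Matrix ((Fin N × Fin n) ⊕ (Fin N × Fin n)) (Fin N × Fin n) ℝ be the vertical stack of the identity matrix and its negation, and let B_b be the all-ones vector. Then the following are equivalent: (1) for every disturbance sequence d : Fin N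 → (Fin n → ℝ) with ‖d k‖_∞ ≤ ε for all k, and for every i ∈ Fin N, one has G.mulVec ((A^(i+1)).mulVec x + ∑ k ≤ i, (A^(i-k)).mulVec (d k)) ≤ H componentwise; (2) there exists a matrix P : Matrix (Fin N × Fin q) ((Fin N × Fin n) ⊕ (Fin N × Fin n)) ℝ with all entries nonnegative such that P * A_b = E and P.mulVec B_b ≤ ε⁻¹ • F componentwise. -/
/-!
Linear duality for the box `{v | ∀ j, |v j| ≤ ε}` is explicit. The maximum of `a ⬝ᵥ v` over it is
`ε * ∑ j, |a j|`, attained at `v j = ε * sign (a j)`. Dually, if a row `a` is written as a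
difference `p - q` of nonnegative rows, then the entries of `p` and `q` add up to at least
`∑ j, |a j|`, with equality for `p = a⁺` and `q = a⁻`. So safety and the existence of multipliers
impose the same bound on the `ℓ¹` norm of each row of the map from stacked disturbances to
constraint values.
-/

section Box

open Matrix

variable {R K m ι : Type*} [Fintype ι]

theorem dotProduct_le_mul_sum_abs [CommRing R] [LinearOrder R] [IsOrderedRing R]
    (a : ι → R) {v : ι → R} {ε : R} (hv : ∀ j, |v j| ≤ ε) : a ⬝ᵥ v ≤ ε * ∑ j, |a j| := by
  rw [dotProduct, Finset.mul_sum]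
  refine Finset.sum_le_sum fun j _ => ?_
  calc a j * v j ≤ |a j| * |v j| := (le_abs_self _).trans (abs_mul _ _).le
    _ ≤ |a j| * ε := mul_le_mul_of_nonneg_left (hv j) (abs_nonneg _)
    _ = ε * |a j| := mul_comm _ _

theorem dotProduct_mul_sign [CommRing R] [LinearOrder R] [IsStrictOrderedRing R]
    (a : ι → R) (ε : R) :
    (a ⬝ᵥ fun j => ε * (SignType.sign (a j) : R)) = ε * ∑ j, |a j| := by
  simp only [dotProduct, Finset.mul_sum, mul_left_comm, self_mul_sign]

theorem abs_mul_sign_le [Ring R] [LinearOrder R] [IsOrderedAddMonoid R] {ε : R} (hε : 0 ≤ ε)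
    (s : SignType) : |ε * (s : R)| ≤ ε := by
  cases s <;> simp [abs_of_nonneg hε, hε]

theorem forall_abs_le_dotProduct_le_iff [CommRing R] [LinearOrder R] [IsStrictOrderedRing R]
    (a : ι → R) (b : R) {ε : R} (hε : 0 ≤ ε) :
    (∀ v : ι → R, (∀ j, |v j| ≤ ε) → a ⬝ᵥ v ≤ b) ↔ ε * ∑ j, |a j| ≤ b := by
  refine ⟨fun h => ?_, fun h v hv => (dotProduct_le_mul_sum_abs a hv).trans h⟩
  rw [← dotProduct_mul_sign]
  exact h _ fun j => abs_mul_sign_le hε _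

theorem forall_abs_le_mulVec_le_iff [CommRing R] [LinearOrder R] [IsStrictOrderedRing R]
    (E : Matrix m ι R) (F : m → R) {ε : R} (hε : 0 ≤ ε) :
    (∀ v : ι → R, (∀ j, |v j| ≤ ε) → E *ᵥ v ≤ F) ↔ ∀ i, ε * ∑ j, |E i j| ≤ F i := by
  simp only [← forall_abs_le_dotProduct_le_iff _ _ hε, Pi.le_def, mulVec]
  exact ⟨fun h i v hv => h v hv i, fun h v hv i => h i v hv⟩

theorem mul_fromRows_one_neg_one [DecidableEq ι] [Ring R] (P : Matrix m (ι ⊕ ι) R) :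
    P * fromRows (1 : Matrix ι ι R) (-1 : Matrix ι ι R) = P.toCols₁ - P.toCols₂ := by
  conv_lhs => rw [← fromCols_toCols P, fromCols_mul_fromRows]
  rw [Matrix.mul_one, Matrix.mul_neg, Matrix.mul_one, sub_eq_add_neg]

theorem mulVec_one_apply_sumType [NonAssocSemiring R] (P : Matrix m (ι ⊕ ι) R) (i : m) :
    (P *ᵥ 1) i = ∑ j, (P i (.inl j) + P i (.inr j)) := by
  simp [mulVec, dotProduct, Finset.sum_add_distrib]

theorem exists_nonneg_mul_fromRows_one_neg_one_iff [DecidableEq ι] [Ring R] [LinearOrder R]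
    [IsOrderedAddMonoid R] (E : Matrix m ι R) (c : m → R) :
    (∃ P : Matrix m (ι ⊕ ι) R, (∀ i j, 0 ≤ P i j) ∧
      P * fromRows (1 : Matrix ι ι R) (-1 : Matrix ι ι R) = E ∧ P *ᵥ 1 ≤ c) ↔
        ∀ i, ∑ j, |E i j| ≤ c i := by
  simp only [mul_fromRows_one_neg_one, Pi.le_def, mulVec_one_apply_sumType]
  constructor
  · rintro ⟨P, hP, rfl, hc⟩ i
    refine (Finset.sum_le_sum fun j _ => ?_).trans (hc i)
    calc |P i (.inl j) - P i (.inr j)| ≤ |P i (.inl j)| + |P i (.inr j)| := abs_sub _ _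
      _ = P i (.inl j) + P i (.inr j) := by rw [abs_of_nonneg (hP _ _), abs_of_nonneg (hP _ _)]
  · intro h
    refine ⟨fromCols (of fun i j => (E i j)⁺) (of fun i j => (E i j)⁻), ?_, ?_, fun i => ?_⟩
    · rintro i (j | j)
      exacts [posPart_nonneg _, negPart_nonneg _]
    · ext i j
      simp
    · simpa [posPart_add_negPart] using h i

theorem forall_abs_le_mulVec_le_iff_exists_nonneg [DecidableEq ι] [Field K] [LinearOrder K]
    [IsStrictOrderedRing K] (E : Matrix m ι K) (F : m → K) {ε : K} (hε : 0 < ε) :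
    (∀ v : ι → K, (∀ j, |v j| ≤ ε) → E *ᵥ v ≤ F) ↔
      ∃ P : Matrix m (ι ⊕ ι) K, (∀ i j, 0 ≤ P i j) ∧
        P * fromRows (1 : Matrix ι ι K) (-1 : Matrix ι ι K) = E ∧ P *ᵥ 1 ≤ ε⁻¹ • F := by
  simp only [forall_abs_le_mulVec_le_iff E F hε.le, exists_nonneg_mul_fromRows_one_neg_one_iff,
    Pi.smul_apply, smul_eq_mul, le_inv_mul_iff₀ hε]

end Box

section LinearSystem

open Matrix

variable {R K ι κ : Type*} [Fintype ι] [DecidableEq ι] {N : ℕ}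

/-- The matrix `E` of the theorem: it sends the stacked disturbances `d(0), …, d(N-1)` of
`x(k+1) = A x(k) + d(k)` to their contribution to the constraint values `G x(1), …, G x(N)`. Row
block `i` belongs to time `i + 1`. -/
def disturbanceMatrix [Semiring R] (A : Matrix ι ι R) (G : Matrix κ ι R) (N : ℕ) :
    Matrix (Fin N × κ) (Fin N × ι) R :=
  of fun ir kj =>
    if (kj.1 : ℕ) ≤ (ir.1 : ℕ) then (G * A ^ ((ir.1 : ℕ) - (kj.1 : ℕ))) ir.2 kj.2 else 0

/-- The vector `F` of the theorem: the margin by which the undisturbed trajectory from `x` satisfies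
the constraints `G y ≤ H` at times `1, …, N`. Block `i` belongs to time `i + 1`. -/
def nominalSlack [Ring R] (A : Matrix ι ι R) (G : Matrix κ ι R) (H : κ → R) (x : ι → R) (N : ℕ) :
    Fin N × κ → R :=
  fun ir => (H - G *ᵥ (A ^ ((ir.1 : ℕ) + 1) *ᵥ x)) ir.2

theorem disturbanceMatrix_mulVec_uncurry_apply [Semiring R] (A : Matrix ι ι R) (G : Matrix κ ι R)
    (d : Fin N → ι → R) (i : Fin N) (r : κ) :
    (disturbanceMatrix A G N *ᵥ Function.uncurry d) (i, r) =
      (G *ᵥ ∑ k ∈ Finset.Iic i, A ^ ((i : ℕ) - (k : ℕ)) *ᵥ d k) r := by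
  rw [mulVec_sum, Finset.sum_apply, ← Finset.filter_ge_eq_Iic, Finset.sum_filter]
  simp only [mulVec_mulVec]
  simp only [disturbanceMatrix, Fin.le_def, mulVec, dotProduct, of_apply, Fintype.sum_prod_type,
    Function.uncurry_apply_pair]
  refine Finset.sum_congr rfl fun k _ => ?_
  split_ifs <;> simp

theorem forall_mulVec_state_le_iff [Ring R] [PartialOrder R] [IsOrderedAddMonoid R]
    (A : Matrix ι ι R) (G : Matrix κ ι R) (H : κ → R) (x : ι → R) (d : Fin N → ι → R) :
    (∀ i : Fin N, G *ᵥ (A ^ ((i : ℕ) + 1) *ᵥ x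
        + ∑ k ∈ Finset.Iic i, A ^ ((i : ℕ) - (k : ℕ)) *ᵥ d k) ≤ H) ↔
      disturbanceMatrix A G N *ᵥ Function.uncurry d ≤ nominalSlack A G H x N := by
  simp only [Pi.le_def, Prod.forall, disturbanceMatrix_mulVec_uncurry_apply, nominalSlack,
    mulVec_add, Pi.add_apply, Pi.sub_apply, le_sub_iff_add_le']

theorem finite_horizon_safety_farkas_general [Field K] [LinearOrder K] [IsStrictOrderedRing K]
    (A : Matrix ι ι K) (G : Matrix κ ι K) (H : κ → K) (x : ι → K) {ε : K} (hε : 0 < ε) :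
    (∀ d : Fin N → ι → K, (∀ k j, |d k j| ≤ ε) → ∀ i : Fin N,
        G *ᵥ (A ^ ((i : ℕ) + 1) *ᵥ x
          + ∑ k ∈ Finset.Iic i, A ^ ((i : ℕ) - (k : ℕ)) *ᵥ d k) ≤ H) ↔
      ∃ P : Matrix (Fin N × κ) ((Fin N × ι) ⊕ (Fin N × ι)) K, (∀ i j, 0 ≤ P i j) ∧
        P * fromRows (1 : Matrix (Fin N × ι) (Fin N × ι) K) (-1 : Matrix (Fin N × ι) (Fin N × ι) K)
          = disturbanceMatrix A G N ∧
        P *ᵥ 1 ≤ ε⁻¹ • nominalSlack A G H x N := by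
  rw [← forall_abs_le_mulVec_le_iff_exists_nonneg _ _ hε,
    ← (Equiv.curry (Fin N) ι K).symm.forall_congr_right]
  simp only [forall_mulVec_state_le_iff, Equiv.curry_symm_apply, Prod.forall,
    Function.uncurry_apply_pair]

end LinearSystem

/-- Theorem 4.3 (finite-horizon safety for linear systems, Farkas
characterization). Condition (1): every disturbance sequence of sup-norm at
most `ε` keeps the state in the polytope `{y | G y ≤ H}` at all times
`1, …, N`. Condition (2): existence of a nonnegative Farkas multiplier matrix
`P` with `P * A_b = E` and `P B_b ≤ ε⁻¹ F`, where `A_b` stacks the identity and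
its negation, `B_b` is the all-ones vector, `E` is the lower block-triangular
matrix with block `(i,k)` equal to `G * A^(i-k)` for `k ≤ i` (zero otherwise),
and block `i` of `F` is `H - G A^(i+1) x`. -/
theorem finite_horizon_safety_farkas {n q N : ℕ} (hN : 1 ≤ N)
    (A : Matrix (Fin n) (Fin n) ℝ)
    (G : Matrix (Fin q) (Fin n) ℝ) (H : Fin q → ℝ)
    (x : Fin n → ℝ) (ε : ℝ) (hε : 0 < ε) :
    (∀ d : Fin N → (Fin n → ℝ), (∀ k, ‖d k‖ ≤ ε) → ∀ i : Fin N,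
        G.mulVec ((A ^ ((i : ℕ) + 1)).mulVec x
          + ∑ k ∈ Finset.Iic i, (A ^ ((i : ℕ) - (k : ℕ))).mulVec (d k)) ≤ H) ↔
      ∃ P : Matrix (Fin N × Fin q) ((Fin N × Fin n) ⊕ (Fin N × Fin n)) ℝ,
        (∀ i j, 0 ≤ P i j) ∧
        P * Matrix.fromRows (1 : Matrix (Fin N × Fin n) (Fin N × Fin n) ℝ) (-1)
          = Matrix.of (fun ir kj =>
              if (kj.1 : ℕ) ≤ (ir.1 : ℕ) then
                (G * A ^ ((ir.1 : ℕ) - (kj.1 : ℕ))) ir.2 kj.2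
              else 0) ∧
        P.mulVec (fun _ => 1) ≤ ε⁻¹ •
          (fun ir : Fin N × Fin q =>
            (H - G.mulVec ((A ^ ((ir.1 : ℕ) + 1)).mulVec x)) ir.2) := by
  simp only [pi_norm_le_iff_of_nonneg hε.le, Real.norm_eq_abs]
  -- In the statement, `P * _` elaborates to the product of `CStarMatrix`, which unfolds to that of
  -- `Matrix`; hence `exact` closes the goal where `rw` would not find the pattern.
  exact finite_horizon_safety_farkas_general A G H x hε
end
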